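/- For every α ≥ 0, every L ≥ 0 and every x ∈ ℝ, one has lim_{t→∞} t^{−3α/2} ∫₀¹ ∫_ℝ (1−s)^{−1/2} p_{1−s}( x/√t − y ) · min( 1, L ( t^{3/2} s |y| )^{−1/2} ) dy ds = 0, provided that α > 0 or L ≥ 0 (for α = 0 the limit holds by dominated convergence since the min-term tends to 0 pointwise). -/

import Mathlib

open MeasureTheory Filter Set

/-- The one-dimensional heat kernel `p_t(x) = (2πt)^{-1/2} exp(-x²/(2t))`. -/
noncomputable def heatKernel (t x : ℝ) : ℝ :=
  (2 * Real.pi * t) ^ (-(1:ℝ)/2) * Real.exp (-x ^ 2 / (2 * t))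

/-- The heat kernel at time `t > 0` is the centred Gaussian density of variance `t`. -/
lemma heatKernel_eq_gaussianPDFReal {t : ℝ} (ht : 0 < t) :
    heatKernel t = ProbabilityTheory.gaussianPDFReal 0 t.toNNReal := by
  funext x
  have h : (0:ℝ) ≤ 2 * Real.pi * t := by positivity
  simp only [heatKernel, ProbabilityTheory.gaussianPDFReal, sub_zero, Real.coe_toNNReal t ht.le]
  rw [Real.sqrt_eq_rpow, ← Real.rpow_neg h, neg_div]

lemma integrable_heatKernel {t : ℝ} (ht : 0 < t) : Integrable (heatKernel t) := by
  rw [heatKernel_eq_gaussianPDFReal ht]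
  exact ProbabilityTheory.integrable_gaussianPDFReal _ _

lemma integral_heatKernel {t : ℝ} (ht : 0 < t) : ∫ y, heatKernel t y = 1 := by
  rw [heatKernel_eq_gaussianPDFReal ht]
  exact ProbabilityTheory.integral_gaussianPDFReal_eq_one _ (Real.toNNReal_pos.2 ht).ne'

lemma heatKernel_nonneg {t : ℝ} (ht : 0 ≤ t) (x : ℝ) : 0 ≤ heatKernel t x := by
  unfold heatKernel
  positivity

lemma measurable_heatKernel : Measurable fun q : ℝ × ℝ => heatKernel q.1 q.2 := by
  unfold heatKernel
  fun_prop

/-- The truncated factor lies in `[0, 1]`. -/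
lemma min_one_mul_rpow_mem_Icc {L : ℝ} (hL : 0 ≤ L) {a : ℝ} (ha : 0 ≤ a) (r : ℝ) :
    min 1 (L * a ^ r) ∈ Icc (0:ℝ) 1 :=
  ⟨le_min zero_le_one (by positivity), min_le_left _ _⟩

/-- The truncated factor vanishes in the limit, off the origin. -/
lemma tendsto_min_one_mul_rpow (L x : ℝ) {s z : ℝ} (hs : 0 < s) (hz : z ≠ 0) :
    Tendsto (fun t : ℝ =>
      min 1 (L * (t ^ ((3:ℝ)/2) * s * |x / Real.sqrt t - z|) ^ (-(1:ℝ)/2))) atTop (nhds 0) := by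
  have hpow : Tendsto (fun t : ℝ => t ^ ((3:ℝ)/2) * s) atTop atTop :=
    (tendsto_rpow_atTop (by norm_num)).atTop_mul_const hs
  have habs : Tendsto (fun t : ℝ => |x / Real.sqrt t - z|) atTop (nhds |0 - z|) :=
    ((tendsto_const_nhds.div_atTop Real.tendsto_sqrt_atTop).sub_const z).abs
  have hbase := hpow.atTop_mul_pos (by simpa using hz) habs
  have hneg : Tendsto (fun a : ℝ => a ^ (-(1:ℝ)/2)) atTop (nhds 0) := by
    rw [neg_div]
    exact tendsto_rpow_neg_atTop (by norm_num)
  simpa using tendsto_const_nhds (x := (1:ℝ)).min ((hneg.comp hbase).const_mul L)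

lemma integrableOn_one_sub_rpow : IntegrableOn (fun s : ℝ => (1 - s) ^ (-(1:ℝ)/2)) (Ioo 0 1) := by
  have h : IntervalIntegrable (fun s : ℝ => s ^ (-(1:ℝ)/2)) volume 0 1 :=
    intervalIntegral.intervalIntegrable_rpow' (by norm_num)
  have hsub := (h.comp_sub_left 1).symm
  simp only [sub_zero, sub_self] at hsub
  rwa [intervalIntegrable_iff_integrableOn_Ioo_of_le zero_le_one] at hsub

/-- For every `α ≥ 0`, `L ≥ 0` and `x ∈ ℝ`,
`lim_{t→∞} t^{-3α/2} ∫₀¹ ∫_ℝ (1-s)^{-1/2} p_{1-s}(x/√t - y)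
  min(1, L (t^{3/2} s |y|)^{-1/2}) dy ds = 0`. -/
theorem tendsto_truncation_integral (α : ℝ) (hα : 0 ≤ α) (L : ℝ) (hL : 0 ≤ L) (x : ℝ) :
    Tendsto (fun t : ℝ => t ^ (-(3 * α) / 2) * ∫ s in Ioo (0:ℝ) 1, ∫ y : ℝ,
        (1 - s) ^ (-(1:ℝ)/2) * heatKernel (1 - s) (x / Real.sqrt t - y) *
          min 1 (L * (t ^ ((3:ℝ)/2) * s * |y|) ^ (-(1:ℝ)/2)))
      atTop (nhds 0) := by
  have hbd (t : ℝ) (ht : 0 < t) (s : ℝ) (hs : s ∈ Ioo (0:ℝ) 1) (y : ℝ) :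
      ‖(1 - s) ^ (-(1:ℝ)/2) * heatKernel (1 - s) (x / Real.sqrt t - y) *
        min 1 (L * (t ^ ((3:ℝ)/2) * s * |y|) ^ (-(1:ℝ)/2))‖ ≤
      (1 - s) ^ (-(1:ℝ)/2) * heatKernel (1 - s) (x / Real.sqrt t - y) := by
    have hs0 : 0 < s := hs.1
    have hs1 : 0 ≤ 1 - s := sub_nonneg.2 hs.2.le
    obtain ⟨h0, h1⟩ := min_one_mul_rpow_mem_Icc hL
      (show 0 ≤ t ^ ((3:ℝ)/2) * s * |y| by positivity) (-(1:ℝ)/2)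
    have hk : 0 ≤ (1 - s) ^ (-(1:ℝ)/2) * heatKernel (1 - s) (x / Real.sqrt t - y) :=
      mul_nonneg (by positivity) (heatKernel_nonneg hs1 _)
    rw [Real.norm_of_nonneg (mul_nonneg hk h0)]
    exact mul_le_of_le_one_right hk h1
  have hdouble : Tendsto (fun t : ℝ => ∫ s in Ioo (0:ℝ) 1, ∫ y : ℝ,
        (1 - s) ^ (-(1:ℝ)/2) * heatKernel (1 - s) (x / Real.sqrt t - y) *
          min 1 (L * (t ^ ((3:ℝ)/2) * s * |y|) ^ (-(1:ℝ)/2))) atTop (nhds 0) := by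
    rw [show nhds (0:ℝ) = nhds (∫ _ in Ioo (0:ℝ) 1, (0:ℝ)) by rw [integral_zero]]
    refine tendsto_integral_filter_of_dominated_convergence _ ?_ ?_ integrableOn_one_sub_rpow ?_
    · refine Eventually.of_forall fun t => ?_
      have hk : Measurable fun q : ℝ × ℝ => heatKernel (1 - q.1) (x / Real.sqrt t - q.2) :=
        measurable_heatKernel.comp (f := fun q : ℝ × ℝ => (1 - q.1, x / Real.sqrt t - q.2))
          (by fun_prop)
      have hm : Measurable fun q : ℝ × ℝ =>
          (1 - q.1) ^ (-(1:ℝ)/2) * heatKernel (1 - q.1) (x / Real.sqrt t - q.2) *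
            min 1 (L * (t ^ ((3:ℝ)/2) * q.1 * |q.2|) ^ (-(1:ℝ)/2)) := by
        fun_prop
      exact hm.stronglyMeasurable.integral_prod_right'.aestronglyMeasurable
    · filter_upwards [eventually_gt_atTop 0] with t ht
      filter_upwards [ae_restrict_mem measurableSet_Ioo] with s hs
      have hs1 : 0 < 1 - s := sub_pos.2 hs.2
      refine (norm_integral_le_of_norm_le
        (((integrable_heatKernel hs1).comp_sub_left _).const_mul _)
        (Eventually.of_forall (hbd t ht s hs))).trans_eq ?_
      rw [integral_const_mul, integral_sub_left_eq_self (heatKernel (1 - s)),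
        integral_heatKernel hs1, mul_one]
    · filter_upwards [ae_restrict_mem measurableSet_Ioo] with s hs
      have hs1 : 0 < 1 - s := sub_pos.2 hs.2
      have hshift (t : ℝ) : ∫ y : ℝ,
          (1 - s) ^ (-(1:ℝ)/2) * heatKernel (1 - s) (x / Real.sqrt t - y) *
            min 1 (L * (t ^ ((3:ℝ)/2) * s * |y|) ^ (-(1:ℝ)/2)) =
          ∫ z : ℝ, (1 - s) ^ (-(1:ℝ)/2) * heatKernel (1 - s) z *
            min 1 (L * (t ^ ((3:ℝ)/2) * s * |x / Real.sqrt t - z|) ^ (-(1:ℝ)/2)) := by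
        rw [← integral_sub_left_eq_self _ volume (x / Real.sqrt t)]
        simp only [sub_sub_cancel]
      simp only [hshift]
      rw [show nhds (0:ℝ) = nhds (∫ _ : ℝ, (0:ℝ)) by rw [integral_zero]]
      refine tendsto_integral_filter_of_dominated_convergence _ ?_ ?_
        ((integrable_heatKernel hs1).const_mul ((1 - s) ^ (-(1:ℝ)/2))) ?_
      · refine Eventually.of_forall fun t => ?_
        have hk : Measurable (heatKernel (1 - s)) :=
          measurable_heatKernel.comp measurable_prodMk_left
        exact Measurable.aestronglyMeasurable (by fun_prop)
      · filter_upwards [eventually_gt_atTop 0] with t ht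
        refine Eventually.of_forall fun z => ?_
        simpa only [sub_sub_cancel] using hbd t ht s hs (x / Real.sqrt t - z)
      · filter_upwards [Measure.ae_ne volume (0:ℝ)] with z hz
        simpa only [mul_zero] using
          (tendsto_min_one_mul_rpow L x hs.1 hz).const_mul
            ((1 - s) ^ (-(1:ℝ)/2) * heatKernel (1 - s) z)
  refine squeeze_zero_norm' ?_ (tendsto_zero_iff_norm_tendsto_zero.1 hdouble)
  filter_upwards [eventually_ge_atTop 1] with t ht
  rw [norm_mul, Real.norm_of_nonneg (Real.rpow_nonneg (by linarith) _)]
  exact mul_le_of_le_one_left (norm_nonneg _)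
    (Real.rpow_le_one_of_one_le_of_nonpos ht (by linarith))
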